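/- Suppose λ is an r-multipartition and λ⁻ is the multipartition obtained from λ by removing an e-rim hook from some component λ^{(j)} (equivalently, on β-sets, by replacing some β ∈ B^j with β − e ∉ B^j by β − e). Then w(λ) = w(λ⁻) + r. -/

import Mathlib

/-!
Combinatorial framework for multipartitions, residues, β-sets, abacus levels,
weights, hubs, core blocks and Scopes-type moves, following Fayers and the paper.
Rows and columns of Young diagrams are indexed from 0, so the node in row `b`
and column `c` (0-based) of component `j` has residue `a j + c - b` mod `e`.
-/

open scoped Classical

namespace AK

/-- A partition, given by its (antitone, finitely supported) sequence of parts,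
rows indexed from `0`. -/
structure PartitionFun : Type where
  part : ℕ → ℕ
  antitone : Antitone part
  finite_support : ∃ N, ∀ b, N ≤ b → part b = 0

/-- The node in row `b`, column `c` (0-based) belongs to the Young diagram. -/
def PartitionFun.InDiag (lam : PartitionFun) (b c : ℕ) : Prop := c < lam.part b

/-- The node `(b,c)` is removable: deleting it leaves the diagram of a partition. -/
def PartitionFun.Removable (lam : PartitionFun) (b c : ℕ) : Prop :=
  lam.part b = c + 1 ∧ lam.part (b + 1) ≤ c

/-- The node `(b,c)` is addable: adjoining it gives the diagram of a partition. -/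
def PartitionFun.Addable (lam : PartitionFun) (b c : ℕ) : Prop :=
  lam.part b = c ∧ (b = 0 ∨ lam.part b < lam.part (b - 1))

/-- An `r`-multipartition. -/
abbrev Multipartition (r : ℕ) := Fin r → PartitionFun

/-- Nodes: `(b, c, j)` with row `b`, column `c`, component `j`. -/
abbrev Node (r : ℕ) := ℕ × ℕ × Fin r

/-- The Young diagram of a multipartition, as a set of nodes. -/
def diag {r : ℕ} (lam : Multipartition r) : Set (Node r) :=
  {x | (lam x.2.2).InDiag x.1 x.2.1}

/-- The size `n` of a multipartition of `n`. -/
noncomputable def msize {r : ℕ} (lam : Multipartition r) : ℕ :=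
  Set.ncard (diag lam)

/-- `c_i(λ)`: the number of nodes of residue `i` (mod `e`). -/
noncomputable def nodeCount {r : ℕ} (e : ℕ) (a : Fin r → ℤ) (lam : Multipartition r)
    (i : ℤ) : ℕ :=
  Set.ncard {x : Node r | (lam x.2.2).InDiag x.1 x.2.1 ∧
    (a x.2.2 + (x.2.1 : ℤ) - (x.1 : ℤ)) % (e : ℤ) = i % e}

/-- Number of removable nodes of residue `i` in component `j`. -/
noncomputable def removableCount {r : ℕ} (e : ℕ) (a : Fin r → ℤ) (lam : Multipartition r)
    (i : ℤ) (j : Fin r) : ℕ :=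
  Set.ncard {p : ℕ × ℕ | (lam j).Removable p.1 p.2 ∧
    (a j + (p.2 : ℤ) - (p.1 : ℤ)) % (e : ℤ) = i % e}

/-- Number of addable nodes of residue `i` in component `j`. -/
noncomputable def addableCount {r : ℕ} (e : ℕ) (a : Fin r → ℤ) (lam : Multipartition r)
    (i : ℤ) (j : Fin r) : ℕ :=
  Set.ncard {p : ℕ × ℕ | (lam j).Addable p.1 p.2 ∧
    (a j + (p.2 : ℤ) - (p.1 : ℤ)) % (e : ℤ) = i % e}

/-- `δ^j_i(λ)` = (removable `i`-nodes of component `j`) − (addable `i`-nodes of component `j`). -/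
noncomputable def delta {r : ℕ} (e : ℕ) (a : Fin r → ℤ) (lam : Multipartition r)
    (i : ℤ) (j : Fin r) : ℤ :=
  (removableCount e a lam i j : ℤ) - (addableCount e a lam i j : ℤ)

/-- The hub `δ_i(λ) = Σ_j δ^j_i(λ)`. -/
noncomputable def hub {r : ℕ} (e : ℕ) (a : Fin r → ℤ) (lam : Multipartition r) (i : ℤ) : ℤ :=
  ∑ j : Fin r, delta e a lam i j

/-- Two multipartitions have the same hub. -/
def SameHub {r : ℕ} (e : ℕ) (a : Fin r → ℤ) (lam mu : Multipartition r) : Prop :=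
  ∀ i : ℤ, hub e a lam i = hub e a mu i

/-- `d_i(m) = min { δ^j_i(m) : 1 ≤ j ≤ r }`. -/
noncomputable def dmin {r : ℕ} (e : ℕ) (a : Fin r → ℤ) (lam : Multipartition r) (i : ℤ) : ℤ :=
  sInf {x : ℤ | ∃ j : Fin r, delta e a lam i j = x}

/-- The weight `w(λ) = Σ_j c_{a_j}(λ) − (1/2) Σ_{i∈ℤ/eℤ} (c_i(λ) − c_{i+1}(λ))²`. -/
noncomputable def weight {r : ℕ} (e : ℕ) (a : Fin r → ℤ) (lam : Multipartition r) : ℚ :=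
  (∑ j : Fin r, (nodeCount e a lam (a j) : ℚ)) -
    (1 / 2 : ℚ) * ∑ i ∈ Finset.range e,
      ((nodeCount e a lam (i : ℤ) : ℚ) - (nodeCount e a lam ((i : ℤ) + 1) : ℚ)) ^ 2

/-- The β-set `B^j = {λ_b + a_j − b : b ≥ 1}` (here with rows indexed from 0). -/
def betaSet (aj : ℤ) (lam : PartitionFun) : Set ℤ :=
  {x | ∃ b : ℕ, x = (lam.part b : ℤ) + aj - ((b : ℤ) + 1)}

/-- A partition is an `e`-core: `β ∈ B` implies `β − e ∈ B`. -/
def IsECore (e : ℕ) (aj : ℤ) (lam : PartitionFun) : Prop :=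
  ∀ x ∈ betaSet aj lam, x - (e : ℤ) ∈ betaSet aj lam

/-- A multicore: all components are `e`-cores. -/
def IsMulticore {r : ℕ} (e : ℕ) (a : Fin r → ℤ) (lam : Multipartition r) : Prop :=
  ∀ j, IsECore e (a j) (lam j)

/-- `ℓ^a_{ij}(λ)`: the level of the lowest bead on runner `i`, i.e. the largest `x`
with `x·e + i` in the β-set. -/
noncomputable def level (e : ℕ) (aj : ℤ) (lam : PartitionFun) (i : ℕ) : ℤ :=
  sSup {x : ℤ | x * (e : ℤ) + (i : ℤ) ∈ betaSet aj lam}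

/-- `γ^{jk}_i(λ) = ℓ^a_{ij}(λ) − ℓ^a_{ik}(λ)`. -/
noncomputable def gamma {r : ℕ} (e : ℕ) (a : Fin r → ℤ) (lam : Multipartition r)
    (i : ℕ) (j k : Fin r) : ℤ :=
  level e (a j) (lam j) i - level e (a k) (lam k) i

/-- `γ^{jk}_{il}(λ) = γ^{jk}_i(λ) − γ^{jk}_l(λ)`. -/
noncomputable def gammaD {r : ℕ} (e : ℕ) (a : Fin r → ℤ) (lam : Multipartition r)
    (i l : ℕ) (j k : Fin r) : ℤ :=
  gamma e a lam i j k - gamma e a lam l j k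

/-- Move a bead from runner `i` to runner `l` in the β-set `S`: replace the largest
element of `S` congruent to `i` mod `e` by the smallest integer congruent to `l`
mod `e` not in `S`. -/
noncomputable def moveBead (e : ℕ) (i l : ℕ) (S : Set ℤ) : Set ℤ :=
  insert (sInf {x : ℤ | x % (e : ℤ) = (l : ℤ) % e ∧ x ∉ S})
    (S \ {sSup {x : ℤ | x % (e : ℤ) = (i : ℤ) % e ∧ x ∈ S}})

/-- The effect of `s^{jk}_{il}` on the tuple of β-sets: move a bead from runner `i`
to runner `l` in component `j`, and from runner `l` to runner `i` in component `k`. -/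
noncomputable def swapSets {r : ℕ} (e i l : ℕ) (j k : Fin r) (S : Fin r → Set ℤ) :
    Fin r → Set ℤ :=
  Function.update (Function.update S j (moveBead e i l (S j))) k
    (moveBead e l i (Function.update S j (moveBead e i l (S j)) k))

/-- `m' = s^{jk}_{il}(m)`, expressed via β-sets. -/
def IsSwap {r : ℕ} (e : ℕ) (a : Fin r → ℤ) (i l : ℕ) (j k : Fin r)
    (m m' : Multipartition r) : Prop :=
  ∀ j', betaSet (a j') (m' j') = swapSets e i l j k (fun t => betaSet (a t) (m t)) j'

/-- `λ` lies in a core block: its weight is minimal among the weights of all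
multipartitions with the same hub. -/
def MinimalWeight {r : ℕ} (e : ℕ) (a : Fin r → ℤ) (lam : Multipartition r) : Prop :=
  ∀ mu : Multipartition r, SameHub e a lam mu → weight e a lam ≤ weight e a mu

/-- `(b_0,…,b_{e−1})` is a base tuple for `mu` with respect to the multicharge `a'`
(congruent to `a` componentwise mod `e`): each `ℓ^{a'}_{ij}(mu)` is `b i` or `b i + 1`. -/
def IsBaseTuple {r : ℕ} (e : ℕ) (a : Fin r → ℤ) (mu : Multipartition r)
    (a' : Fin r → ℤ) (b : ℕ → ℤ) : Prop :=
  (∀ j, (e : ℤ) ∣ (a' j - a j)) ∧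
    ∀ i < e, ∀ j, level e (a' j) (mu j) i = b i ∨ level e (a' j) (mu j) i = b i + 1

/-- `K_i(C)` for the core block of `mu`: among all base tuples (over all admissible
multicharges), take `b i` maximal and then `b (i−1)` minimal, and set
`K_i = b_i − b_{i−1} − 1` for `i ≠ 0`, `K_0 = b_0 − b_{e−1} − 2`. -/
noncomputable def Kconst {r : ℕ} (e : ℕ) (a : Fin r → ℤ) (mu : Multipartition r)
    (i : ℕ) : ℤ :=
  let Bi : ℤ := sSup {x : ℤ | ∃ a' bt, IsBaseTuple e a mu a' bt ∧ bt i = x}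
  let iprev : ℕ := if i = 0 then e - 1 else i - 1
  let Bp : ℤ := sInf {x : ℤ | ∃ a' bt, IsBaseTuple e a mu a' bt ∧ bt i = Bi ∧ bt iprev = x}
  Bi - Bp - (if i = 0 then 2 else 1)

/-- The map `φ_i : ℤ → ℤ`. -/
def phiMap (e i : ℕ) (x : ℤ) : ℤ :=
  if x % (e : ℤ) = ((i : ℤ) - 1) % e then x + 1
  else if x % (e : ℤ) = (i : ℤ) % e then x - 1
  else x

/-- Lexicographic order on multipartitions: `λ > μ`. -/
def lexGT {r : ℕ} (lam mu : Multipartition r) : Prop :=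
  ∃ j : Fin r, (∀ j' < j, (lam j').part = (mu j').part) ∧
    ∃ i : ℕ, (∀ i' < i, (lam j).part i' = (mu j).part i') ∧
      (mu j).part i < (lam j).part i

/-- `x` is above `y`: `j < j'` or (`j = j'` and `b < b'`). -/
def NodeAbove {r : ℕ} (x y : Node r) : Prop :=
  x.2.2 < y.2.2 ∨ (x.2.2 = y.2.2 ∧ x.1 < y.1)

/-- The order on nodes: `x < y` iff `y` is above `x`. -/
def NodeLT {r : ℕ} (x y : Node r) : Prop := NodeAbove y x

/-- `N_A(λ)` = (addable `i`-nodes of `λ` below `A`) − (removable `i`-nodes of `λ` below `A`). -/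
noncomputable def Nfac {r : ℕ} (e : ℕ) (a : Fin r → ℤ) (lam : Multipartition r)
    (i : ℤ) (A : Node r) : ℤ :=
  (Set.ncard {y : Node r | (lam y.2.2).Addable y.1 y.2.1 ∧
      (a y.2.2 + (y.2.1 : ℤ) - (y.1 : ℤ)) % (e : ℤ) = i % e ∧ NodeAbove A y} : ℤ) -
  (Set.ncard {y : Node r | (lam y.2.2).Removable y.1 y.2.1 ∧
      (a y.2.2 + (y.2.1 : ℤ) - (y.1 : ℤ)) % (e : ℤ) = i % e ∧ NodeAbove A y} : ℤ)

/-- `lam` is obtained from `mu` by adding one `e`-rim hook to some component: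
on β-sets, some `β ∈ B^j` with `β + e ∉ B^j` is replaced by `β + e`. -/
def AddRimHook {r : ℕ} (e : ℕ) (a : Fin r → ℤ) (mu lam : Multipartition r) : Prop :=
  ∃ (j : Fin r) (β : ℤ), β ∈ betaSet (a j) (mu j) ∧ β + (e : ℤ) ∉ betaSet (a j) (mu j) ∧
    betaSet (a j) (lam j) = insert (β + (e : ℤ)) (betaSet (a j) (mu j) \ {β}) ∧
    ∀ j' ≠ j, betaSet (a j') (lam j') = betaSet (a j') (mu j')

/-- The number of inversions (length) of a permutation of `Fin d`. -/
noncomputable def permLength (d : ℕ) (σ : Equiv.Perm (Fin d)) : ℕ :=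
  (Finset.univ.filter (fun p : Fin d × Fin d => p.1 < p.2 ∧ σ p.2 < σ p.1)).card

/-- floor counting function -/
def FF (e : ℕ) (i x : ℤ) : ℤ := (x - i) / (e : ℤ)

lemma FF_succ {e : ℕ} (he : 2 ≤ e) (i x : ℤ) :
    FF e i (x + 1) = FF e i x + if (x + 1) % (e : ℤ) = i % e then 1 else 0 := by
  unfold FF
  have he' : (0 : ℤ) < e := by omega
  have hmod : (x + 1) % (e : ℤ) = i % e ↔ (e : ℤ) ∣ (x + 1 - i) := by
    exact Int.emod_eq_emod_iff_emod_sub_eq_zero.trans Int.dvd_iff_emod_eq_zero.symm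
  have h1 := Int.emod_add_mul_ediv (x - i) e
  have h2 := Int.emod_nonneg (x - i) he'.ne'
  have h3 := Int.emod_lt_of_pos (x - i) he'
  set q := (x - i) / (e : ℤ)
  set m := (x - i) % (e : ℤ)
  split_ifs with h
  · rw [hmod] at h
    obtain ⟨k, hk⟩ := h
    rw [hk, Int.mul_ediv_cancel_left _ he'.ne']
    have : (e : ℤ) * (k - q) = m + 1 := by linarith [mul_sub (e : ℤ) k q]
    have h4 : 0 < k - q := by
      by_contra hc
      nlinarith
    have h5 : k - q < 2 := by
      by_contra hc
      nlinarith
    omega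
  · have hm : m + 1 ≠ e := by
      intro hm
      apply h
      rw [hmod]
      exact ⟨q + 1, by linarith [mul_add (e : ℤ) q 1]⟩
    have h6 : x + 1 - i = (m + 1) + e * q := by linarith
    rw [h6, Int.add_mul_ediv_left _ _ he'.ne', Int.ediv_eq_zero_of_lt (by omega) (by omega)]
    ring

lemma row_sum {e : ℕ} (he : 2 ≤ e) (i y : ℤ) (p : ℕ) :
    (∑ c ∈ Finset.range p, if (y + (c : ℤ)) % (e : ℤ) = i % e then (1 : ℤ) else 0)
      = FF e i (y + p - 1) - FF e i (y - 1) := by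
  induction p with
  | zero => simp
  | succ p ih =>
    rw [Finset.sum_range_succ, ih]
    have := FF_succ he i (y + p - 1)
    rw [show y + (p : ℤ) - 1 + 1 = y + p by ring] at this
    rw [show y + ((p + 1 : ℕ) : ℤ) - 1 = y + p by push_cast; ring, this]
    ring

/-- the beta numbers -/
def bnum (aj : ℤ) (lam : PartitionFun) (b : ℕ) : ℤ := (lam.part b : ℤ) + aj - ((b : ℤ) + 1)

lemma bnum_inj (aj : ℤ) (lam : PartitionFun) : Function.Injective (bnum aj lam) := by
  have : StrictAnti (bnum aj lam) := by
    intro b c h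
    have := lam.antitone h.le
    unfold bnum
    omega
  exact this.injective

lemma mem_T {aj : ℤ} {lam : PartitionFun} {N : ℕ} (hN : ∀ b, N ≤ b → lam.part b = 0) (x : ℤ) :
    x ∈ (Finset.range N).image (bnum aj lam) ↔ x ∈ betaSet aj lam ∧ aj - N ≤ x := by
  simp only [Finset.mem_image, Finset.mem_range, betaSet, Set.mem_setOf_eq, bnum]
  constructor
  · rintro ⟨b, hb, rfl⟩
    exact ⟨⟨b, rfl⟩, by omega⟩
  · rintro ⟨⟨b, rfl⟩, h⟩
    refine ⟨b, ?_, rfl⟩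
    by_contra hc
    have := hN b (by omega)
    omega

lemma nodeCount_eq {e r : ℕ} (he : 2 ≤ e) (a : Fin r → ℤ) (lam : Multipartition r) (N : ℕ)
    (hN : ∀ j b, N ≤ b → (lam j).part b = 0) (i : ℤ) :
    (nodeCount e a lam i : ℤ) = ∑ j, ((∑ x ∈ (Finset.range N).image (bnum (a j) (lam j)), FF e i x)
      - ∑ b ∈ Finset.range N, FF e i (a j - b - 1)) := by
  set M := ∑ j, (lam j).part 0
  have hM : ∀ j b, (lam j).part b ≤ M := fun j b =>
    ((lam j).antitone (Nat.zero_le b)).trans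
      (Finset.single_le_sum (f := fun j => (lam j).part 0) (fun _ _ => Nat.zero_le _)
        (Finset.mem_univ j))
  have hset : {x : Node r | (lam x.2.2).InDiag x.1 x.2.1 ∧
      (a x.2.2 + (x.2.1 : ℤ) - (x.1 : ℤ)) % (e : ℤ) = i % e} =
      (((Finset.range N ×ˢ Finset.range M ×ˢ (Finset.univ : Finset (Fin r))).filter
        (fun x : Node r => x.2.1 < (lam x.2.2).part x.1 ∧
      (a x.2.2 + (x.2.1 : ℤ) - (x.1 : ℤ)) % (e : ℤ) = i % e) : Finset (Node r)) : Set (Node r)) := by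
    ext ⟨b, c, j⟩
    simp only [PartitionFun.InDiag, Set.mem_setOf_eq, Finset.coe_filter, Finset.mem_product,
      Finset.mem_range, Finset.mem_univ, and_true]
    constructor
    · rintro ⟨h1, h2⟩
      refine ⟨⟨?_, lt_of_lt_of_le h1 (hM j b)⟩, h1, h2⟩
      by_contra hc
      have := hN j b (by omega)
      omega
    · exact fun h => h.2
  unfold nodeCount
  rw [hset, Set.ncard_coe_finset, Finset.card_filter, Finset.sum_product]
  simp only [Finset.sum_product_right]
  push_cast
  rw [Finset.sum_comm]
  refine Finset.sum_congr rfl fun j _ => ?_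
  rw [Finset.sum_image (fun x _ y _ h => bnum_inj _ _ h), ← Finset.sum_sub_distrib]
  refine Finset.sum_congr rfl fun b _ => ?_
  have := row_sum he i (a j - b) ((lam j).part b)
  rw [show bnum (a j) (lam j) b = a j - b + (lam j).part b - 1 by unfold bnum; ring, ← this]
  rw [← Finset.sum_subset (Finset.range_mono (hM j b))]
  · refine Finset.sum_congr rfl fun c hc => ?_
    rw [Finset.mem_range] at hc
    simp only [hc, true_and]
    rw [show a j + (c : ℤ) - b = a j - b + c by ring]
  · intro c _ hc
    rw [Finset.mem_range] at hc
    simp [hc]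

lemma nodeCount_rim {e r : ℕ} (he : 2 ≤ e) (a : Fin r → ℤ)
    (lam mu : Multipartition r) (hrim : AddRimHook e a mu lam) (i : ℤ) :
    nodeCount e a lam i = nodeCount e a mu i + 1 := by
  obtain ⟨j, β, hβ, hβe, hj, hj'⟩ := hrim
  choose N1 hN1 using fun j => (lam j).finite_support
  choose N2 hN2 using fun j => (mu j).finite_support
  set N := (∑ j, N1 j) + (∑ j, N2 j) + (a j - β).toNat
  have h1 : ∀ j, N1 j ≤ ∑ j, N1 j := fun j =>
    Finset.single_le_sum (f := N1) (fun _ _ => Nat.zero_le _) (Finset.mem_univ j)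
  have h2 : ∀ j, N2 j ≤ ∑ j, N2 j := fun j =>
    Finset.single_le_sum (f := N2) (fun _ _ => Nat.zero_le _) (Finset.mem_univ j)
  have hl : ∀ j b, N ≤ b → (lam j).part b = 0 := fun k b h => hN1 k b (by have := h1 k; omega)
  have hm : ∀ j b, N ≤ b → (mu j).part b = 0 := fun k b h => hN2 k b (by have := h2 k; omega)
  have hNβ : a j - N ≤ β := by omega
  have key : (nodeCount e a lam i : ℤ) = nodeCount e a mu i + 1 := by
    rw [nodeCount_eq he a lam N hl, nodeCount_eq he a mu N hm, Finset.sum_sub_distrib,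
      Finset.sum_sub_distrib, ← Finset.add_sum_erase _ _ (Finset.mem_univ j),
      ← Finset.add_sum_erase (a := j) (Finset.univ)
        (fun j => ∑ x ∈ (Finset.range N).image (bnum (a j) (mu j)), FF e i x) (Finset.mem_univ j)]
    have hrest : ∀ k ∈ Finset.univ.erase j,
        (∑ x ∈ (Finset.range N).image (bnum (a k) (lam k)), FF e i x) =
        ∑ x ∈ (Finset.range N).image (bnum (a k) (mu k)), FF e i x := by
      intro k hk
      have : (Finset.range N).image (bnum (a k) (lam k)) =
          (Finset.range N).image (bnum (a k) (mu k)) := by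
        ext x
        rw [mem_T (hl k), mem_T (hm k), hj' k (Finset.ne_of_mem_erase hk)]
      rw [this]
    rw [Finset.sum_congr rfl hrest]
    have hT : (Finset.range N).image (bnum (a j) (lam j)) =
        insert (β + (e : ℤ)) (((Finset.range N).image (bnum (a j) (mu j))).erase β) := by
      ext x
      rw [mem_T (hl j), Finset.mem_insert, Finset.mem_erase, mem_T (hm j), hj]
      simp only [Set.mem_insert_iff, Set.mem_diff, Set.mem_singleton_iff]
      constructor
      · tauto
      · rintro (h | h)
        · exact ⟨Or.inl h, by omega⟩
        · tauto
    have hmem : β ∈ (Finset.range N).image (bnum (a j) (mu j)) := (mem_T (hm j) β).2 ⟨hβ, hNβ⟩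
    have hnot : β + (e : ℤ) ∉ ((Finset.range N).image (bnum (a j) (mu j))).erase β := by
      rw [Finset.mem_erase, mem_T (hm j)]
      tauto
    rw [hT, Finset.sum_insert hnot, ← Finset.add_sum_erase _ _ hmem]
    have : FF e i (β + e) = FF e i β + 1 := by
      unfold FF
      rw [show β + (e : ℤ) - i = β - i + e by ring, Int.add_ediv_of_dvd_right (dvd_refl _),
        Int.ediv_self (by omega)]
    rw [this]
    ring
  exact_mod_cast key

/-- Proposition 3.4: if `λ⁻` is obtained from `λ` by removing an
`e`-rim hook from some component, then `w(λ) = w(λ⁻) + r`. -/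
theorem stmt_17 {e r : ℕ} (he : 2 ≤ e) (hr : 0 < r) (a : Fin r → ℤ)
    (lam lamMinus : Multipartition r)
    (hrim : AddRimHook e a lamMinus lam) :
    weight e a lam = weight e a lamMinus + (r : ℚ) := by
  have h := nodeCount_rim he a lam lamMinus hrim
  unfold weight
  simp only [h]
  push_cast
  simp only [add_sub_add_right_eq_sub, Finset.sum_add_distrib, Finset.sum_const,
    Finset.card_univ, Fintype.card_fin, nsmul_eq_mul, mul_one]
  ring

end AK
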